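/- arXiv:1906.10345 — 4 statements merged into one kernel-verified Lean document; each statement's English description precedes it below -/
import Mathlib

section
/- Let X₀, U, Y be complex vector spaces, A₀ : X₀ → X₀, E : U → X₀, C₀ : X₀ → Y linear maps, and η ≥ 0 a real scalar. Assume: (a) for every s ∈ ℂ with Re s ≥ 0 and every v ∈ X₀, if s·v − A₀ v = 0 and C₀ v = 0 then v = 0; (b) the map η·I − A₀ is injective; (c) the composition C₀ ∘ E : U → Y is injective. Then for every s ∈ ℂ with Re s ≥ 0 and every pair (v, u) ∈ X₀ × U satisfying the three equations s·v − A₀ v = 0, (s − η)·u = 0, and C₀ v + C₀ (E u) = 0, one has v = 0 and u = 0. -/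
/-- Hautus kernel condition for the extended pair `(A, C)` when `A_rc E = 0`:
if `ker(sI − A₀) ∩ ker C₀ = {0}` on the closed right half-plane, `ηI − A₀` is
injective, and `C₀ ∘ E` is injective, then any `(v, u)` with
`s•v − A₀ v = 0`, `(s − η)•u = 0` and `C₀ v + C₀ (E u) = 0` (with `Re s ≥ 0`)
vanishes. -/
theorem extended_detectability_kernel_case_i
    {X₀ U Y : Type*} [AddCommGroup X₀] [Module ℂ X₀]
    [AddCommGroup U] [Module ℂ U] [AddCommGroup Y] [Module ℂ Y]
    (A₀ : X₀ →ₗ[ℂ] X₀) (E : U →ₗ[ℂ] X₀) (C₀ : X₀ →ₗ[ℂ] Y)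
    (η : ℝ) (hη : 0 ≤ η)
    (ha : ∀ s : ℂ, 0 ≤ s.re → ∀ v : X₀, s • v - A₀ v = 0 → C₀ v = 0 → v = 0)
    (hb : Function.Injective (fun v : X₀ => (η : ℂ) • v - A₀ v))
    (hc : Function.Injective (fun u : U => C₀ (E u))) :
    ∀ s : ℂ, 0 ≤ s.re → ∀ (v : X₀) (u : U),
      s • v - A₀ v = 0 → (s - (η : ℂ)) • u = 0 → C₀ v + C₀ (E u) = 0 →
      v = 0 ∧ u = 0 := by
  intro s hs v u hv hu hC
  rcases smul_eq_zero.mp hu with h | rfl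
  -- `s = η`: injectivity of `ηI − A₀` kills `v`, then injectivity of `C₀ ∘ E` kills `u`.
  · obtain rfl : s = (η : ℂ) := sub_eq_zero.mp h
    obtain rfl : v = 0 := hb (by simpa using hv)
    exact ⟨rfl, hc (by simpa using hC)⟩
  -- `u = 0`: the output equation reduces to `C₀ v = 0`.
  · exact ⟨ha s hs v hv (by simpa using hC), rfl⟩
end

section
/- Let X₀ and U be complex Hilbert spaces, E : U → X₀ and T : U → X₀ bounded linear operators with Hilbert-space adjoints E* and T*, A₀⋆ : X₀ → X₀ a linear map, and η ≥ 0 a real scalar. Assume that for every s ∈ ℂ with Re s ≥ 0 and every v ∈ X₀, if s·v − A₀⋆ v = 0 and (T + (η − conj(s))·E)* v = 0, then v = 0 (here (T + (η − conj(s))·E)* v = T* v + (η − s)·E* v since η is real). Then for every s ∈ ℂ with Re s ≥ 0 and every pair (v, u) ∈ X₀ × U satisfying s·v − A₀⋆ v = 0, −T* v + (s − η)·u = 0, and −E* v + u = 0, one has v = 0 and u = 0. -/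
/-- Hautus kernel condition for the extended pair `(A, B)` when `A_rc E = T ≠ 0`:
if `ker(sI − A₀*) ∩ ker((T + (η − s̄)E)*) = {0}` on the closed right half-plane,
then any `(v, u)` with `s•v − A₀* v = 0`, `−T* v + (s − η)•u = 0` and
`−E* v + u = 0` (with `Re s ≥ 0`) vanishes. -/
theorem extended_stabilizability_kernel_case_ii
    {X₀ U : Type*} [NormedAddCommGroup X₀] [InnerProductSpace ℂ X₀]
    [CompleteSpace X₀] [NormedAddCommGroup U] [InnerProductSpace ℂ U]
    [CompleteSpace U]
    (E T : U →L[ℂ] X₀) (A₀star : X₀ →ₗ[ℂ] X₀) (η : ℝ) (hη : 0 ≤ η)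
    (ha : ∀ s : ℂ, 0 ≤ s.re → ∀ v : X₀,
      s • v - A₀star v = 0 →
      ContinuousLinearMap.adjoint (T + ((η : ℂ) - (starRingEnd ℂ) s) • E) v = 0 →
      v = 0) :
    ∀ s : ℂ, 0 ≤ s.re → ∀ (v : X₀) (u : U),
      s • v - A₀star v = 0 →
      -(ContinuousLinearMap.adjoint T v) + (s - (η : ℂ)) • u = 0 →
      -(ContinuousLinearMap.adjoint E v) + u = 0 →
      v = 0 ∧ u = 0 := by
  intro s hs v u hv hT hE
  obtain rfl : u = ContinuousLinearMap.adjoint E v := (neg_add_eq_zero.mp hE).symm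
  have hv0 : v = 0 := by
    refine ha s hs v hv ?_
    -- The adjoint is conjugate-linear and `η` is real, so `(η - s̄) • E` contributes `(η - s) • E* v`.
    have hadj : ContinuousLinearMap.adjoint (T + ((η : ℂ) - (starRingEnd ℂ) s) • E) v
        = ContinuousLinearMap.adjoint T v
          + ((η : ℂ) - s) • ContinuousLinearMap.adjoint E v := by
      simp [map_add, map_smulₛₗ]
    rw [hadj, neg_add_eq_zero.mp hT, ← add_smul]
    simp
  exact ⟨hv0, by simp [hv0]⟩
end

section
/- Let X₀ and U be complex normed spaces, A_d, A_rc : X₀ → X₀ and ℬ : X₀ → U linear maps, η ∈ ℝ, and E : U → X₀ a continuous linear map satisfying A_d(E q) = η·(E q) and ℬ(E q) = q for all q ∈ U. Let u : ℝ → U be differentiable and let v : ℝ → X₀ satisfy, for every t ∈ ℝ: ℬ(v(t)) = 0 and v is differentiable at t with derivative v'(t) = (A_d + A_rc)(v(t)) − E(u'(t) − η·u(t)) + A_rc(E(u(t))). Then the function w := v + E ∘ u satisfies, for every t ∈ ℝ: w is differentiable at t with w'(t) = (A_d + A_rc)(w(t)), and ℬ(w(t)) = u(t). -/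
/-- Change of variables, direction 1 of Theorem 2.5: if `v` solves the abstract
Cauchy problem `v̇ = (A_d + A_rc) v − E(u̇ − η u) + A_rc (E u)` with
`ℬ v(t) = 0`, and `E` satisfies `A_d (E q) = η • E q` and `ℬ (E q) = q`, then
`w := v + E ∘ u` solves the boundary control system `ẇ = (A_d + A_rc) w`,
`ℬ w = u`. -/
theorem cauchy_to_boundary_control
    {X₀ U : Type*} [NormedAddCommGroup X₀] [NormedSpace ℂ X₀]
    [NormedAddCommGroup U] [NormedSpace ℂ U]
    (A_d A_rc : X₀ →ₗ[ℂ] X₀) (ℬ : X₀ →ₗ[ℂ] U) (η : ℝ)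
    (E : U →L[ℂ] X₀)
    (hE1 : ∀ q : U, A_d (E q) = (η : ℂ) • E q)
    (hE2 : ∀ q : U, ℬ (E q) = q)
    (u : ℝ → U) (hu : Differentiable ℝ u)
    (v : ℝ → X₀)
    (hvker : ∀ t : ℝ, ℬ (v t) = 0)
    (hvode : ∀ t : ℝ, HasDerivAt v
      ((A_d + A_rc) (v t) - E (deriv u t - η • u t) + A_rc (E (u t))) t) :
    ∀ t : ℝ,
      HasDerivAt (fun s => v s + E (u s)) ((A_d + A_rc) (v t + E (u t))) t ∧
      ℬ (v t + E (u t)) = u t := by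
  intro t
  refine ⟨?_, by rw [map_add, hvker, hE2, zero_add]⟩
  -- Time is real, so the chain rule uses `E` as a real-linear map.
  have hEu : HasDerivAt (fun s => E (u s)) (E (deriv u t)) t :=
    (E.restrictScalars ℝ).hasFDerivAt.comp_hasDerivAt t (hu t).hasDerivAt
  have hEη : E (η • u t) = (η : ℂ) • E (u t) := by
    rw [← Complex.coe_smul, map_smul]
  -- The `E u̇` terms cancel, and the remaining `η • E u` equals `A_d (E u)`.
  convert (hvode t).fun_add hEu using 1
  rw [map_sub, hEη, ← hE1]
  simp only [LinearMap.add_apply, map_add]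
  abel
end

section
/- Let X₀ and U be complex normed spaces, A_d, A_rc : X₀ → X₀ and ℬ : X₀ → U linear maps, η ∈ ℝ, and E : U → X₀ a continuous linear map satisfying A_d(E q) = η·(E q) and ℬ(E q) = q for all q ∈ U. Let u : ℝ → U be differentiable and let w : ℝ → X₀ satisfy, for every t ∈ ℝ: w is differentiable at t with derivative w'(t) = (A_d + A_rc)(w(t)), and ℬ(w(t)) = u(t). Then the function v := w − E ∘ u satisfies, for every t ∈ ℝ: ℬ(v(t)) = 0 and v is differentiable at t with v'(t) = (A_d + A_rc)(v(t)) − E(u'(t) − η·u(t)) + A_rc(E(u(t))). -/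
/-- Change of variables, direction 2 of Theorem 2.5: if `w` solves the boundary
control system `ẇ = (A_d + A_rc) w`, `ℬ w = u`, and `E` satisfies
`A_d (E q) = η • E q` and `ℬ (E q) = q`, then `v := w − E ∘ u` satisfies
`ℬ v(t) = 0` and solves the abstract Cauchy problem
`v̇ = (A_d + A_rc) v − E(u̇ − η u) + A_rc (E u)`. -/
theorem boundary_control_to_cauchy
    {X₀ U : Type*} [NormedAddCommGroup X₀] [NormedSpace ℂ X₀]
    [NormedAddCommGroup U] [NormedSpace ℂ U]
    (A_d A_rc : X₀ →ₗ[ℂ] X₀) (ℬ : X₀ →ₗ[ℂ] U) (η : ℝ)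
    (E : U →L[ℂ] X₀)
    (hE1 : ∀ q : U, A_d (E q) = (η : ℂ) • E q)
    (hE2 : ∀ q : U, ℬ (E q) = q)
    (u : ℝ → U) (hu : Differentiable ℝ u)
    (w : ℝ → X₀)
    (hwode : ∀ t : ℝ, HasDerivAt w ((A_d + A_rc) (w t)) t)
    (hwbc : ∀ t : ℝ, ℬ (w t) = u t) :
    ∀ t : ℝ,
      ℬ (w t - E (u t)) = 0 ∧
      HasDerivAt (fun s => w s - E (u s))
        ((A_d + A_rc) (w t - E (u t)) - E (deriv u t - η • u t)
          + A_rc (E (u t))) t := by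
  intro t
  refine ⟨by rw [map_sub, hwbc, hE2, sub_self], ?_⟩
  have hEu : HasDerivAt (fun s => E (u s)) (E (deriv u t)) t :=
    (E.restrictScalars ℝ).hasFDerivAt.comp_hasDerivAt t (hu t).hasDerivAt
  -- The real scalar `η` in the claim acts as the complex scalar `(η : ℂ)` of `hE1`.
  have hη : E (η • u t) = (η : ℂ) • E (u t) := by
    rw [← Complex.coe_smul, map_smul]
  -- Since `A_d (E u) = η E u`, the `η` terms cancel, and so do the two `A_rc (E u)` terms.
  have hval : (A_d + A_rc) (w t - E (u t)) - E (deriv u t - η • u t) + A_rc (E (u t))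
      = (A_d + A_rc) (w t) - E (deriv u t) := by
    simp only [LinearMap.add_apply, map_sub, hE1, hη]
    abel
  rw [hval]
  exact (hwode t).sub hEu
end
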